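/- arXiv:2104.13072 — 4 statements merged into one kernel-verified Lean document; each statement's English description precedes it below -/
import Mathlib

section
/- Let φ be a primitive morphism on a finite alphabet A = {a_1, …, a_d} with adjacency matrix M, where m_{i,j} is the number of occurrences of a_i in φ(a_j). Suppose the dominant eigenvalue of M (the real Perron–Frobenius eigenvalue α satisfying α ≥ |λ| for every complex eigenvalue λ of M) is irrational. Then any iterative fixed point of φ is not q-automatic for any integer q ≥ 2. -/
/-!
The proof compares two facts about letter frequencies.

In a fixed point `x` of a primitive morphism every letter has a frequency, and the vector of
frequencies is the positive eigenvector `v` of `M`, normalised to have sum `1`. Up to a bounded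
error, a long prefix of `x` is the image under `φ^K` of a shorter prefix, so its vector of letter
counts is close to `M^K w` for some `w ≥ 0` (`exists_prefix_decomposition`), and for large `K` all
such vectors point nearly in the direction of `v` (`perron_contraction`); this gives
`tendsto_letter_frequency`.

In a `q`-automatic sequence every letter frequency that exists is rational
(`IsQAutomatic.rational_frequency`). The numbers of occurrences of a letter in the prefixes of
length `q^n` of the sequences of the kernel, divided by `q^n`, form an orbit `B^n g` of a rational
matrix `B`, and a convergent sequence `l (B^n g)` with rational data has a rational limit
(`rational_of_tendsto_orbit`).

If `x` were automatic, then `v` would be rational, and `M v = α v` would make `α` rational. That the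
eigenvalue of `v` is the dominant eigenvalue `α` is `perron_eigenvalue_eq`; the positive right and
left eigenvectors come from `exists_perron_vector`, by the variational argument of Collatz and
Wielandt.
-/

/-- A sequence `a : ℕ → A` is `q`-automatic if its `q`-kernel, the set of
subsequences `n ↦ a (q^k * n + r)` with `k ≥ 0` and `0 ≤ r < q^k`, is finite. -/
def IsQAutomatic {A : Type*} (q : ℕ) (a : ℕ → A) : Prop :=
  {s : ℕ → A | ∃ k r : ℕ, r < q ^ k ∧ s = fun n => a (q ^ k * n + r)}.Finite

/-- The extension of a morphism `φ : A → A*` to finite words, by concatenation. -/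
def wordApply {A : Type*} (φ : A → List A) (w : List A) : List A := w.flatMap φ

open Filter Topology Matrix

/-! ### Rationality of frequencies in automatic sequences -/

section Rational

open Polynomial

/-- The minimal polynomial of `B` is `(X - 1)^e * g` with `g(1) ≠ 0`. Replacing `v` by `g(B) v`
multiplies the limit by `g(1)` and yields a sequence killed by the `e`-th power of the difference
operator; being convergent, such a sequence is constant, so its limit is its first term. -/
theorem rational_of_tendsto_orbit {V : Type*} [AddCommGroup V] [Module ℚ V]
    [FiniteDimensional ℚ V] (B : Module.End ℚ V) (l : V →ₗ[ℚ] ℚ) (v : V) (f : ℝ)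
    (h : Tendsto (fun n : ℕ => ((l ((B ^ n) v) : ℚ) : ℝ)) atTop (𝓝 f)) :
    ∃ r : ℚ, f = r := by
  have hlim : ∀ p : ℚ[X], Tendsto (fun n : ℕ => ((l ((B ^ n) (aeval B p v)) : ℚ) : ℝ)) atTop
      (𝓝 (((p.eval 1 : ℚ) : ℝ) * f)) := by
    intro p
    induction p using Polynomial.induction_on' with
    | add p q hp hq =>
      convert hp.add hq using 2 <;> simp [add_mul]
    | monomial m a =>
      have := ((tendsto_add_atTop_iff_nat m).2 h).const_mul (a : ℝ)
      convert this using 2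
      · simp [aeval_monomial, pow_add]
      · simp
  -- If the `(e+1)`-st difference vanishes, the first difference is constant by induction, and
  -- it tends to `0` because the sequence converges; hence it is `0`.
  have hconst : ∀ (e : ℕ) (p : ℚ[X]), aeval B ((X - C 1) ^ e * p) = 0 →
      ∀ n : ℕ, l ((B ^ n) (aeval B p v)) = l (aeval B p v) := by
    intro e
    induction e with
    | zero => intro p hp n; simp at hp; simp [hp]
    | succ e ih =>
      intro p hp
      have h1 := ih ((X - C 1) * p) (by rw [← mul_assoc, ← pow_succ]; exact hp)
      have h2 := hlim ((X - C 1) * p)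
      simp_rw [h1] at h2
      have h3 := tendsto_nhds_unique h2 tendsto_const_nhds
      simp only [eval_mul, eval_sub, eval_X, eval_C, sub_self, zero_mul, Rat.cast_zero] at h3
      have h4 : l (aeval B ((X - C 1) * p) v) = 0 := by exact_mod_cast h3.symm
      intro n
      induction n with
      | zero => simp
      | succ n ihn =>
        have h5 := h1 n
        rw [h4] at h5
        rw [← ihn, ← sub_eq_zero, ← h5, ← map_sub]
        simp [pow_succ]
  have hne : minpoly ℚ B ≠ 0 := minpoly.ne_zero (Algebra.IsIntegral.isIntegral B)
  obtain ⟨g, hg, hgd⟩ := exists_eq_pow_rootMultiplicity_mul_and_not_dvd (minpoly ℚ B) hne 1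
  have hc := hconst _ g (by rw [← hg]; exact minpoly.aeval ℚ B)
  have h6 := hlim g
  simp_rw [hc] at h6
  have h7 := tendsto_nhds_unique h6 tendsto_const_nhds
  have hg1 : g.eval 1 ≠ 0 := fun h0 => hgd (dvd_iff_isRoot.2 h0)
  refine ⟨l (aeval B g v) / g.eval 1, ?_⟩
  have : ((g.eval 1 : ℚ) : ℝ) ≠ 0 := by exact_mod_cast hg1
  push_cast
  field_simp
  linarith

theorem sum_range_mul_eq (h : ℕ → ℚ) (q N : ℕ) :
    ∑ j ∈ Finset.range (q * N), h j
      = ∑ r ∈ Finset.range q, ∑ j ∈ Finset.range N, h (q * j + r) := by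
  rw [Finset.sum_comm]
  induction N with
  | zero => simp
  | succ N ih => rw [Nat.mul_succ, Finset.sum_range_add, ih, Finset.sum_range_succ]

/-- Splitting positions by their residue mod `q` expresses the occurrences of `a` in a prefix of
length `q^(n+1)` of a kernel sequence through prefixes of length `q^n` of its `q` decimations, which
lie in the kernel again; the frequency of `a` is thus the limit of a rational linear orbit. -/
theorem IsQAutomatic.rational_frequency {A : Type*} [DecidableEq A] {q : ℕ} (hq : 2 ≤ q)
    {x : ℕ → A} (hx : IsQAutomatic q x) (a : A) (f : ℝ)
    (hf : Tendsto (fun n : ℕ => (∑ j ∈ Finset.range n, if x j = a then (1 : ℝ) else 0) / n)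
      atTop (𝓝 f)) : ∃ r : ℚ, f = r := by
  set K := {s : ℕ → A | ∃ k r : ℕ, r < q ^ k ∧ s = fun n => x (q ^ k * n + r)} with hK
  have hfin : Finite K := hx
  have hxK : x ∈ K := ⟨0, 0, by simp, by simp⟩
  have hdec : ∀ s : K, ∀ r : Fin q, (fun n => s.1 (q * n + r)) ∈ K := by
    rintro ⟨s, k, r, hr, rfl⟩ ⟨r', hr'⟩
    refine ⟨k + 1, q ^ k * r' + r, ?_, ?_⟩
    · calc q ^ k * r' + r < q ^ k * r' + q ^ k := by omega
        _ = q ^ k * (r' + 1) := by ring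
        _ ≤ q ^ k * q := Nat.mul_le_mul_left _ hr'
        _ = q ^ (k + 1) := by ring
    · funext n
      simp only
      congr 1
      ring
  have hq0 : (q : ℚ) ≠ 0 := by positivity
  -- `B` averages over the `q` decimations, `g n s` is the proportion of `a` in `s[0..q^n)`.
  let B : Module.End ℚ (K → ℚ) :=
    { toFun := fun g s => (∑ r : Fin q, g ⟨_, hdec s r⟩) / q
      map_add' := by intro g g'; funext s; simp [Finset.sum_add_distrib, add_div]
      map_smul' := by intro c g; funext s; simp [← Finset.mul_sum, mul_div_assoc] }
  let g : ℕ → K → ℚ := fun n s =>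
    (∑ j ∈ Finset.range (q ^ n), if s.1 j = a then (1 : ℚ) else 0) / (q : ℚ) ^ n
  have hB : ∀ n, (B ^ n) (g 0) = g n := by
    intro n
    induction n with
    | zero => simp
    | succ n ih =>
      rw [pow_succ', Module.End.mul_apply, ih]
      funext s
      simp only [B, g, LinearMap.coe_mk, AddHom.coe_mk]
      rw [← Finset.sum_div, pow_succ' q n, sum_range_mul_eq, pow_succ, div_div,
        Finset.sum_range]
  refine rational_of_tendsto_orbit B (LinearMap.proj (⟨x, hxK⟩ : K)) (g 0) f ?_
  have hpow : Tendsto (fun n : ℕ => q ^ n) atTop atTop :=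
    tendsto_pow_atTop_atTop_of_one_lt (by omega)
  refine (hf.comp hpow).congr fun n => ?_
  rw [hB]
  simp [g]

end Rational

/-! ### Perron–Frobenius theory for primitive matrices -/

theorem exists_pos_le {A : Type*} [Finite A] (d : A → ℝ) (hd : ∀ i, 0 < d i) :
    ∃ ε > 0, ∀ i, ε ≤ d i := by
  cases isEmpty_or_nonempty A
  · exact ⟨1, one_pos, fun i => isEmptyElim i⟩
  · obtain ⟨i, hi⟩ := Finite.exists_min d
    exact ⟨d i, hd i, hi⟩

theorem mulVec_nonneg_of_nonneg {A : Type*} [Fintype A] {M : Matrix A A ℝ}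
    (hM : ∀ i j, 0 ≤ M i j) {w : A → ℝ} (hw : ∀ i, 0 ≤ w i) (i : A) : 0 ≤ (M *ᵥ w) i :=
  Finset.sum_nonneg fun j _ => mul_nonneg (hM i j) (hw j)

theorem pow_mulVec_nonneg {A : Type*} [Fintype A] [DecidableEq A] {M : Matrix A A ℝ}
    (hM : ∀ i j, 0 ≤ M i j) (n : ℕ) {w : A → ℝ} (hw : ∀ i, 0 ≤ w i) :
    ∀ i, 0 ≤ ((M ^ n) *ᵥ w) i := by
  induction n with
  | zero => simpa using hw
  | succ n ih =>
    rw [pow_succ', ← mulVec_mulVec]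
    exact mulVec_nonneg_of_nonneg hM ih

theorem mulVec_pos_of_ne_zero {A : Type*} [Fintype A] {M : Matrix A A ℝ}
    (hM : ∀ i j, 0 < M i j) {w : A → ℝ} (hw : ∀ i, 0 ≤ w i) (hw0 : w ≠ 0) (i : A) :
    0 < (M *ᵥ w) i := by
  obtain ⟨j, hj⟩ := Function.ne_iff.1 hw0
  exact Finset.sum_pos' (fun j _ => mul_nonneg (hM i j).le (hw j))
    ⟨j, Finset.mem_univ j, mul_pos (hM i j) (lt_of_le_of_ne (hw j) (Ne.symm hj))⟩

theorem pow_mulVec_eigen {A : Type*} [Fintype A] [DecidableEq A] {M : Matrix A A ℝ} {t : ℝ}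
    {v : A → ℝ} (h : M *ᵥ v = t • v) (k : ℕ) : (M ^ k) *ᵥ v = t ^ k • v := by
  induction k with
  | zero => simp
  | succ k ih => rw [pow_succ, ← mulVec_mulVec, h, mulVec_smul, ih, smul_smul, pow_succ']

/-- Collatz–Wielandt: among the pairs `(t, u)` with `u` in the simplex and `t u ≤ M u`, one with `t`
maximal is an eigenpair. Otherwise `M^k` would turn the nonzero vector `M u - t u ≥ 0` into a
strictly positive one, and `M^k u` would allow a larger `t`. -/
theorem exists_perron_vector {A : Type*} [Fintype A] [DecidableEq A] [Nonempty A]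
    (M : Matrix A A ℝ) (hM : ∀ i j, 0 ≤ M i j) (k : ℕ) (hk : ∀ i j, 0 < (M ^ k) i j) :
    ∃ (t : ℝ) (v : A → ℝ), (∀ i, 0 < v i) ∧ ∑ i, v i = 1 ∧ M *ᵥ v = t • v := by
  let S : Set (ℝ × (A → ℝ)) :=
    (Set.Icc 0 (∑ i, ∑ j, M i j) ×ˢ stdSimplex ℝ A) ∩ {p | ∀ i, p.1 * p.2 i ≤ (M *ᵥ p.2) i}
  have hSc : IsCompact S := by
    refine (isCompact_Icc.prod (isCompact_stdSimplex ℝ A)).inter_right ?_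
    simp only [Set.ofPred_forall, mulVec, dotProduct]
    exact isClosed_iInter fun i => isClosed_le (by fun_prop) (by fun_prop)
  have hle1 : ∀ u ∈ stdSimplex ℝ A, ∀ i, u i ≤ 1 := fun u hu i =>
    hu.2 ▸ Finset.single_le_sum (fun j _ => hu.1 j) (Finset.mem_univ i)
  have hbd : ∀ (s : ℝ) (u : A → ℝ), u ∈ stdSimplex ℝ A → 0 ≤ s →
      (∀ i, s * u i ≤ (M *ᵥ u) i) → (s, u) ∈ S := by
    intro s u hu hs h
    refine ⟨⟨⟨hs, ?_⟩, hu⟩, h⟩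
    calc s = ∑ i, s * u i := by rw [← Finset.mul_sum, hu.2, mul_one]
      _ ≤ ∑ i, (M *ᵥ u) i := Finset.sum_le_sum fun i _ => h i
      _ ≤ ∑ i, ∑ j, M i j := Finset.sum_le_sum fun i _ => Finset.sum_le_sum fun j _ =>
          mul_le_of_le_one_right (hM i j) (hle1 u hu j)
  have hSn : S.Nonempty := by
    obtain ⟨i0⟩ := ‹Nonempty A›
    refine ⟨(0, Pi.single i0 1), hbd _ _ (single_mem_stdSimplex ℝ i0) le_rfl fun i => ?_⟩
    rw [zero_mul]
    exact mulVec_nonneg_of_nonneg hM (single_mem_stdSimplex ℝ i0).1 i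
  obtain ⟨⟨t, u⟩, htu, hmax⟩ := hSc.exists_isMaxOn hSn continuous_fst.continuousOn
  obtain ⟨⟨⟨ht0, -⟩, hu⟩, hsub⟩ := htu
  simp only at ht0 hu hsub
  have hu0 : u ≠ 0 := by
    rintro rfl
    simpa using hu.2
  have heq : M *ᵥ u = t • u := by
    by_contra hne
    have hdpos := mulVec_pos_of_ne_zero hk (w := M *ᵥ u - t • u)
      (fun i => by simpa using hsub i) (sub_ne_zero.2 hne)
    set y := (M ^ k) *ᵥ u with hy
    have hypos : ∀ i, 0 < y i := mulVec_pos_of_ne_zero hk hu.1 hu0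
    have hcomm : (M ^ k) *ᵥ (M *ᵥ u - t • u) = M *ᵥ y - t • y := by
      rw [mulVec_sub, mulVec_smul, mulVec_mulVec, ← pow_succ, pow_succ', ← mulVec_mulVec]
    rw [hcomm] at hdpos
    set Y := ∑ i, y i with hY
    have hYpos : 0 < Y := Finset.sum_pos (fun i _ => hypos i) Finset.univ_nonempty
    have hz : Y⁻¹ • y ∈ stdSimplex ℝ A := by
      refine ⟨fun i => by have := hypos i; simp; positivity, ?_⟩
      simp only [Pi.smul_apply, smul_eq_mul, ← Finset.mul_sum, ← hY]
      exact inv_mul_cancel₀ hYpos.ne'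
    obtain ⟨ε, hε, hεd⟩ := exists_pos_le (fun i => (M *ᵥ y - t • y) i / y i)
      (fun i => div_pos (hdpos i) (hypos i))
    have := hmax (hbd (t + ε) (Y⁻¹ • y) hz (by positivity) fun i => by
      have h1 := hεd i
      rw [le_div_iff₀ (hypos i)] at h1
      simp only [Pi.sub_apply, Pi.smul_apply, smul_eq_mul] at h1
      rw [mulVec_smul, Pi.smul_apply, Pi.smul_apply, smul_eq_mul, smul_eq_mul]
      have : (t + ε) * y i ≤ (M *ᵥ y) i := by linarith
      calc (t + ε) * (Y⁻¹ * y i) = Y⁻¹ * ((t + ε) * y i) := by ring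
        _ ≤ _ := by gcongr)
    simp only [Set.mem_ofPred_eq] at this
    linarith
  refine ⟨t, u, fun i => ?_, hu.2, heq⟩
  have h1 := mulVec_pos_of_ne_zero hk hu.1 hu0 i
  rw [pow_mulVec_eigen heq] at h1
  refine lt_of_le_of_ne (hu.1 i) fun h0 => ?_
  simp [← h0] at h1

/-- High powers of `M` map the whole nonnegative orthant close to the ray through `v`, uniformly.

For `P = M^k`, with eigenvalue `T = t^k`, the matrix `Q = P - v lᵀ` is still nonnegative, since
the entries of `P` are at least `1` and those of `v` and `l` are at most `1`. Then
`P^n w = s v + Q^n w` for some `s`, and the functional `l` scales by `T` under `P` but only by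
`T - l·v < T` under `Q`, so the remainder `Q^n w` is negligible compared with `P^n w`. -/
theorem perron_contraction {A : Type*} [Fintype A] [DecidableEq A] [Nonempty A]
    (M : Matrix A A ℝ) (k : ℕ) (hk : ∀ i j, 1 ≤ (M ^ k) i j) {t : ℝ}
    {v l : A → ℝ} (hv : ∀ i, 0 < v i) (hv1 : ∑ i, v i = 1) (hMv : M *ᵥ v = t • v)
    (hl : ∀ i, 0 < l i) (hl1 : ∑ i, l i = 1) (hMl : Mᵀ *ᵥ l = t • l) {ε : ℝ} (hε : 0 < ε) :
    ∃ K : ℕ, ∀ w : A → ℝ, (∀ i, 0 ≤ w i) → ∀ i,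
      |((M ^ K) *ᵥ w) i - v i * ∑ j, ((M ^ K) *ᵥ w) j| ≤ ε * ∑ j, ((M ^ K) *ᵥ w) j := by
  have hvle : ∀ i, v i ≤ 1 := fun i =>
    hv1 ▸ Finset.single_le_sum (fun j _ => (hv j).le) (Finset.mem_univ i)
  have hlle : ∀ i, l i ≤ 1 := fun i =>
    hl1 ▸ Finset.single_le_sum (fun j _ => (hl j).le) (Finset.mem_univ i)
  set P := M ^ k with hP
  have hPv : P *ᵥ v = t ^ k • v := pow_mulVec_eigen hMv k
  have hPl : l ᵥ* P = t ^ k • l := by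
    have := pow_mulVec_eigen hMl k
    rwa [← transpose_pow, mulVec_transpose] at this
  set T := t ^ k with hT
  set κ := l ⬝ᵥ v with hκ
  have hκ0 : 0 < κ := Finset.sum_pos (fun i _ => mul_pos (hl i) (hv i)) Finset.univ_nonempty
  set Q := P - vecMulVec v l with hQ
  have hQ0 : ∀ i j, 0 ≤ Q i j := fun i j => by
    have h1 := hk i j
    have h2 : v i * l j ≤ 1 := mul_le_one₀ (hvle i) (hl j).le (hlle j)
    simp only [hQ, Matrix.sub_apply, vecMulVec_apply]
    linarith
  have hQl : l ᵥ* Q = (T - κ) • l := by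
    rw [hQ, vecMul_sub, hPl, vecMul_vecMulVec, sub_smul]
  have hTκ : 0 ≤ T - κ := by
    obtain ⟨i⟩ := ‹Nonempty A›
    have h1 : 0 ≤ (l ᵥ* Q) i := Finset.sum_nonneg fun j _ => mul_nonneg (hl j).le (hQ0 j i)
    rw [hQl] at h1
    exact nonneg_of_mul_nonneg_left h1 (hl i)
  have hTpos : 0 < T := by linarith
  obtain ⟨b, hb, hbl⟩ := exists_pos_le l hl
  obtain ⟨n, hn⟩ := exists_pow_lt_of_lt_one (mul_pos hb hε)
    (show (T - κ) / T < 1 by rw [div_lt_one hTpos]; linarith)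
  refine ⟨k * n, fun w hw i => ?_⟩
  have hdec : ∀ m : ℕ, (∃ s : ℝ, (P ^ m) *ᵥ w = s • v + (Q ^ m) *ᵥ w) ∧
      (∀ i, 0 ≤ ((Q ^ m) *ᵥ w) i) ∧ l ⬝ᵥ ((Q ^ m) *ᵥ w) = (T - κ) ^ m * (l ⬝ᵥ w) ∧
      l ⬝ᵥ ((P ^ m) *ᵥ w) = T ^ m * (l ⬝ᵥ w) := by
    intro m
    induction m with
    | zero => exact ⟨⟨0, by simp⟩, by simpa using hw, by simp, by simp⟩
    | succ m ih =>
      obtain ⟨⟨s, hs⟩, h0, hlQ, hlP⟩ := ih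
      refine ⟨⟨s * T + l ⬝ᵥ ((Q ^ m) *ᵥ w), ?_⟩, ?_, ?_, ?_⟩
      · have hPQ : P = Q + vecMulVec v l := by rw [hQ]; abel
        rw [pow_succ', ← mulVec_mulVec, hs, mulVec_add, mulVec_smul, hPv, pow_succ' Q,
          ← mulVec_mulVec, smul_smul]
        nth_rw 1 [hPQ]
        rw [add_mulVec, vecMulVec_mulVec, add_smul]
        ext i
        simp
        ring
      · rw [pow_succ', ← mulVec_mulVec]
        exact mulVec_nonneg_of_nonneg hQ0 h0
      · rw [pow_succ', ← mulVec_mulVec, dotProduct_mulVec, hQl, smul_dotProduct, hlQ, smul_eq_mul]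
        ring
      · rw [pow_succ', ← mulVec_mulVec, dotProduct_mulVec, hPl, smul_dotProduct, hlP, smul_eq_mul]
        ring
  obtain ⟨⟨s, hs⟩, hr0, hlQ, hlP⟩ := hdec n
  rw [pow_mul, ← hP]
  set y := (P ^ n) *ᵥ w
  set r := (Q ^ n) *ᵥ w
  have hy0 : ∀ i, 0 ≤ y i :=
    pow_mulVec_nonneg (fun i j => zero_le_one.trans (hk i j)) n hw
  have hyi : y i = s * v i + r i := by simp [hs]
  have hys : ∑ j, y j = s + ∑ j, r j := by
    simp [hs, Finset.sum_add_distrib, ← Finset.mul_sum, hv1]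
  have hri : r i ≤ ∑ j, r j := Finset.single_le_sum (fun j _ => hr0 j) (Finset.mem_univ i)
  have hR0 : 0 ≤ ∑ j, r j := Finset.sum_nonneg fun j _ => hr0 j
  have hly : l ⬝ᵥ y ≤ ∑ j, y j :=
    Finset.sum_le_sum fun j _ => mul_le_of_le_one_left (hy0 j) (hlle j)
  have hlr : b * ∑ j, r j ≤ l ⬝ᵥ r := by
    rw [Finset.mul_sum]
    exact Finset.sum_le_sum fun j _ => mul_le_mul_of_nonneg_right (hbl j) (hr0 j)
  have hly0 : 0 ≤ l ⬝ᵥ y := Finset.sum_nonneg fun j _ => mul_nonneg (hl j).le (hy0 j)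
  have hrel : l ⬝ᵥ r = ((T - κ) / T) ^ n * (l ⬝ᵥ y) := by
    rw [hlQ, hlP, div_pow]
    field_simp
  have hfin : b * ∑ j, r j ≤ b * (ε * ∑ j, y j) := calc
    b * ∑ j, r j ≤ ((T - κ) / T) ^ n * (l ⬝ᵥ y) := hrel ▸ hlr
    _ ≤ (b * ε) * ∑ j, y j := by gcongr
    _ = _ := by ring
  have hfin' := le_of_mul_le_mul_left hfin hb
  refine le_trans ?_ hfin'
  rw [hyi, hys]
  have h1 := mul_le_of_le_one_left hR0 (hvle i)
  have h2 := mul_nonneg (hv i).le hR0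
  have h3 := hr0 i
  rw [abs_le]
  constructor <;> linarith

/-! ### Letter frequencies in fixed points of morphisms -/

theorem wordApply_iterate_append {A : Type*} (φ : A → List A) (k : ℕ) (u w : List A) :
    (wordApply φ)^[k] (u ++ w) = (wordApply φ)^[k] u ++ (wordApply φ)^[k] w := by
  induction k generalizing u w with
  | zero => rfl
  | succ k ih => simp only [Function.iterate_succ_apply, wordApply, List.flatMap_append, ih]

theorem count_wordApply {A : Type*} [Fintype A] [DecidableEq A] {φ : A → List A}
    {M : Matrix A A ℕ} (hM : ∀ i j, M i j = (φ j).count i) (w : List A) (i : A) :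
    (wordApply φ w).count i = (M *ᵥ fun j => w.count j) i := by
  induction w with
  | nil => simp [wordApply, mulVec, dotProduct]
  | cons a w ih =>
    have : wordApply φ (a :: w) = φ a ++ wordApply φ w := by simp [wordApply]
    rw [this, List.count_append, ih, ← hM]
    simp [mulVec, dotProduct, List.count_cons, mul_add, Finset.sum_add_distrib, add_comm]

theorem count_wordApply_iterate {A : Type*} [Fintype A] [DecidableEq A] {φ : A → List A}
    {M : Matrix A A ℕ} (hM : ∀ i j, M i j = (φ j).count i) (k : ℕ) (w : List A) :
    (fun i => ((wordApply φ)^[k] w).count i) = (M ^ k) *ᵥ fun j => w.count j := by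
  induction k with
  | zero => simp
  | succ k ih =>
    rw [pow_succ', ← mulVec_mulVec, ← ih]
    funext i
    rw [Function.iterate_succ_apply', count_wordApply hM]

/-- The prefix `x_0 x_1 ⋯ x_{n-1}` of length `n` of the sequence `x`. -/
def seqPrefix {A : Type*} (x : ℕ → A) (n : ℕ) : List A := (List.range n).map x

@[simp] theorem length_seqPrefix {A : Type*} (x : ℕ → A) (n : ℕ) :
    (seqPrefix x n).length = n := by simp [seqPrefix]

theorem seqPrefix_add {A : Type*} (x : ℕ → A) (m n : ℕ) :
    seqPrefix x (m + n) = seqPrefix x m ++ (List.range n).map (fun j => x (m + j)) := by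
  simp [seqPrefix, List.range_add, Function.comp_def]

theorem eq_seqPrefix_of_append {A : Type*} {x : ℕ → A} {u w : List A} {n : ℕ}
    (h : u ++ w = seqPrefix x n) : u = seqPrefix x u.length := by
  have hn : n = u.length + w.length := by
    have := congrArg List.length h
    simpa using this.symm
  rw [hn, seqPrefix_add] at h
  exact (List.append_inj h (by simp)).1

/-- `φ^k` maps prefixes of the fixed point to prefixes: a prefix of length `m` extends to some
`φ^K(x_0)`, whose image `φ^(k+K)(x_0)` is a prefix of `x`. -/
theorem wordApply_iterate_seqPrefix {A : Type*} {φ : A → List A} {x : ℕ → A}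
    (hlen : Tendsto (fun k => ((wordApply φ)^[k] [x 0]).length) atTop atTop)
    (hfix : ∀ k i : ℕ, ∀ hi : i < ((wordApply φ)^[k] [x 0]).length,
      ((wordApply φ)^[k] [x 0])[i]'hi = x i) (k m : ℕ) :
    (wordApply φ)^[k] (seqPrefix x m)
      = seqPrefix x ((wordApply φ)^[k] (seqPrefix x m)).length := by
  have hpre : ∀ K, (wordApply φ)^[K] [x 0] = seqPrefix x ((wordApply φ)^[K] [x 0]).length :=
    fun K => List.ext_getElem (by simp) fun i hi _ => by simp [hfix K i hi, seqPrefix]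
  obtain ⟨K, hK⟩ := (hlen.eventually_ge_atTop m).exists
  obtain ⟨d, hd⟩ := Nat.exists_eq_add_of_le hK
  have h1 := hpre K
  rw [hd, seqPrefix_add] at h1
  have h2 := hpre (k + K)
  rw [Function.iterate_add_apply, h1, wordApply_iterate_append] at h2
  exact eq_seqPrefix_of_append h2

/-- Any length `n` exceeds the length of the image under `φ^k` of some prefix of `x` by at most a
constant depending on `k` only, namely a bound on the lengths of the words `φ^k(a)`. -/
theorem exists_prefix_decomposition {A : Type*} [Finite A] {φ : A → List A} {x : ℕ → A}
    (hlen : Tendsto (fun k => ((wordApply φ)^[k] [x 0]).length) atTop atTop)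
    (hfix : ∀ k i : ℕ, ∀ hi : i < ((wordApply φ)^[k] [x 0]).length,
      ((wordApply φ)^[k] [x 0])[i]'hi = x i) (k : ℕ) :
    ∃ C : ℕ, ∀ n, ∃ m d, d ≤ C ∧ n = ((wordApply φ)^[k] (seqPrefix x m)).length + d := by
  obtain ⟨C, hC⟩ : ∃ C, ∀ a : A, ((wordApply φ)^[k] [a]).length ≤ C := by
    obtain ⟨C, hC⟩ := (Set.finite_range fun a : A => ((wordApply φ)^[k] [a]).length).bddAbove
    exact ⟨C, fun a => hC ⟨a, rfl⟩⟩
  refine ⟨C, fun n => ?_⟩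
  have hex : ∃ m, n < ((wordApply φ)^[k] (seqPrefix x m)).length := by
    obtain ⟨K, hK⟩ := (((tendsto_add_atTop_iff_nat k).2 hlen).eventually_gt_atTop n).exists
    refine ⟨((wordApply φ)^[K] [x 0]).length, ?_⟩
    have hpre : seqPrefix x ((wordApply φ)^[K] [x 0]).length = (wordApply φ)^[K] [x 0] :=
      List.ext_getElem (by simp) fun i _ hi => by simp [hfix K i hi, seqPrefix]
    rwa [hpre, ← Function.iterate_add_apply, add_comm k K]
  classical
  -- The least prefix length whose image is longer than `n` is positive, and the prefix one letter
  -- shorter is the one required.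
  obtain ⟨m, hm⟩ : ∃ m, Nat.find hex = m + 1 := by
    refine Nat.exists_eq_succ_of_ne_zero fun h0 => ?_
    have h1 := Nat.find_spec hex
    rw [h0] at h1
    have h2 : ∀ j, (wordApply φ)^[j] ([] : List A) = [] := fun j =>
      Function.iterate_fixed rfl j
    simp [seqPrefix, h2] at h1
  have h1 := Nat.find_spec hex
  have h2 := Nat.find_min hex (m := m) (by omega)
  rw [hm, seqPrefix_add, wordApply_iterate_append, List.length_append] at h1
  have h3 := hC (x m)
  simp at h1 h2
  exact ⟨m, n - ((wordApply φ)^[k] (seqPrefix x m)).length, by omega, by omega⟩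

/-- Each letter `i` has frequency `v i` in the fixed point, given the uniform contraction of the
powers of `M` towards the ray through `v`. -/
theorem tendsto_letter_frequency {A : Type*} [Fintype A] [DecidableEq A] {φ : A → List A}
    {M : Matrix A A ℕ} (hM : ∀ i j, M i j = (φ j).count i) {x : ℕ → A}
    (hlen : Tendsto (fun k => ((wordApply φ)^[k] [x 0]).length) atTop atTop)
    (hfix : ∀ k i : ℕ, ∀ hi : i < ((wordApply φ)^[k] [x 0]).length,
      ((wordApply φ)^[k] [x 0])[i]'hi = x i)
    {v : A → ℝ} (hv : ∀ i, 0 ≤ v i) (hv1 : ∑ i, v i = 1)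
    (hcontr : ∀ ε > 0, ∃ K : ℕ, ∀ w : A → ℝ, (∀ i, 0 ≤ w i) → ∀ i,
      |((M.map (Nat.cast : ℕ → ℝ) ^ K) *ᵥ w) i - v i * ∑ j, ((M.map (Nat.cast : ℕ → ℝ) ^ K) *ᵥ w) j|
        ≤ ε * ∑ j, ((M.map (Nat.cast : ℕ → ℝ) ^ K) *ᵥ w) j) (i : A) :
    Tendsto (fun n : ℕ => ((seqPrefix x n).count i : ℝ) / n) atTop (𝓝 (v i)) := by
  rw [Metric.tendsto_atTop]
  intro ε hε
  obtain ⟨K, hK⟩ := hcontr (ε / 2) (half_pos hε)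
  obtain ⟨C, hC⟩ := exists_prefix_decomposition hlen hfix K
  have hvi : v i ≤ 1 := hv1 ▸ Finset.single_le_sum (fun j _ => hv j) (Finset.mem_univ i)
  -- The contraction costs `ε/2`, and the boundary effect at most `C/n`, which is below `ε/2` once
  -- `n > 2C/ε`.
  obtain ⟨N, hN⟩ := exists_nat_gt (2 * C / ε)
  refine ⟨N + 1, fun n hn => ?_⟩
  have hn0 : (0 : ℝ) < n := by exact_mod_cast (by omega : 0 < n)
  have hnN : (2 * C : ℝ) < ε * n := by
    rw [div_lt_iff₀ hε] at hN
    have : (N : ℝ) ≤ n := by exact_mod_cast (by omega : N ≤ n)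
    nlinarith
  obtain ⟨m, d, hd, hnd⟩ := hC n
  have hpre := wordApply_iterate_seqPrefix hlen hfix K m
  set L := ((wordApply φ)^[K] (seqPrefix x m)).length with hL
  have hw := hK (fun j => ((seqPrefix x m).count j : ℝ)) (fun j => by positivity) i
  have hcount : (M.map (Nat.cast : ℕ → ℝ) ^ K) *ᵥ (fun j => ((seqPrefix x m).count j : ℝ))
      = fun j => ((seqPrefix x L).count j : ℝ) := by
    have h1 := count_wordApply_iterate hM K (seqPrefix x m)
    have h2 : M.map (Nat.cast : ℕ → ℝ) ^ K = (M ^ K).map (Nat.cast : ℕ → ℝ) :=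
      (map_pow (Nat.castRingHom ℝ).mapMatrix M K).symm
    rw [hpre] at h1
    funext j
    have h3 := congrArg (Nat.cast : ℕ → ℝ) (congrFun h1 j)
    rw [h3, h2]
    simp [mulVec, dotProduct]
  have hsum : ∑ j, ((seqPrefix x L).count j : ℝ) = L := by
    have h1 : ∑ j, (seqPrefix x L).count j = (seqPrefix x L).length := by
      simpa using Multiset.sum_count_eq_card (s := Finset.univ)
        (m := (seqPrefix x L : Multiset A)) (fun a _ => Finset.mem_univ a)
    rw [length_seqPrefix] at h1
    exact_mod_cast h1
  rw [hcount] at hw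
  simp only [hsum] at hw
  obtain ⟨e, he, hen⟩ : ∃ e : ℕ, e ≤ d ∧
      (seqPrefix x n).count i = (seqPrefix x L).count i + e := by
    refine ⟨_, ?_, by rw [hnd, seqPrefix_add, List.count_append]⟩
    exact List.count_le_length.trans (by simp)
  have heR : (e : ℝ) ≤ d := by exact_mod_cast he
  have hdR : (d : ℝ) ≤ C := by exact_mod_cast hd
  have hnR : (n : ℝ) = L + d := by exact_mod_cast hnd
  have he0 : (0 : ℝ) ≤ e := by positivity
  have hd0 : (0 : ℝ) ≤ d := by positivity
  have hvd : v i * d ≤ d := mul_le_of_le_one_left hd0 hvi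
  have hvd0 : 0 ≤ v i * d := mul_nonneg (hv i) hd0
  rw [Real.dist_eq, div_sub' hn0.ne', abs_div, abs_of_pos hn0, div_lt_iff₀ hn0, hen]
  push_cast
  have hexp : (n : ℝ) * v i = v i * L + v i * d := by rw [hnR]; ring
  have hεd : 0 ≤ ε * d := by positivity
  have hεn : ε * n = ε * L + ε * d := by rw [hnR]; ring
  rw [abs_le] at hw
  rw [abs_lt, hexp]
  constructor <;> linarith [hw.1, hw.2]

/-- The eigenvalue `t` of the nonzero vector `v` is at most `α` by dominance of `α`. Conversely,
a complex eigenvector `z` for `α` satisfies `α |z| ≤ M |z|` entrywise, and pairing this with the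
positive left eigenvector `l` gives `α ≤ t`. -/
theorem perron_eigenvalue_eq {A : Type*} [Fintype A] [DecidableEq A] [Nonempty A]
    (M : Matrix A A ℕ) (α : ℝ)
    (heig : (M.map (fun n : ℕ => (n : ℂ))).charpoly.IsRoot (α : ℂ))
    (hdom : ∀ μ : ℂ, (M.map (fun n : ℕ => (n : ℂ))).charpoly.IsRoot μ → ‖μ‖ ≤ α)
    {t : ℝ} {v l : A → ℝ} (hv : v ≠ 0)
    (hMv : M.map (Nat.cast : ℕ → ℝ) *ᵥ v = t • v)
    (hl : ∀ i, 0 < l i) (hMl : l ᵥ* M.map (Nat.cast : ℕ → ℝ) = t • l) : α = t := by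
  have hroot : ∀ μ : ℂ, (M.map (fun n : ℕ => (n : ℂ))).charpoly.IsRoot μ ↔
      ∃ z ≠ 0, M.map (fun n : ℕ => (n : ℂ)) *ᵥ z = μ • z := by
    intro μ
    rw [Polynomial.IsRoot, eval_charpoly, ← exists_mulVec_eq_zero_iff]
    refine exists_congr fun z => and_congr_right fun _ => ?_
    rw [sub_mulVec, sub_eq_zero, scalar_apply, ← smul_one_eq_diagonal, smul_mulVec, one_mulVec]
    exact eq_comm
  apply le_antisymm
  · obtain ⟨z, hz, hMz⟩ := (hroot _).1 heig
    set u : A → ℝ := fun i => ‖z i‖ with hu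
    have hsub : ∀ i, α * u i ≤ (M.map (Nat.cast : ℕ → ℝ) *ᵥ u) i := by
      intro i
      calc α * u i ≤ ‖(α : ℂ)‖ * u i := by
            gcongr
            simpa using le_abs_self α
        _ = ‖(M.map (fun n : ℕ => (n : ℂ)) *ᵥ z) i‖ := by rw [hMz]; simp [hu]
        _ ≤ _ := by
            refine (norm_sum_le _ _).trans (le_of_eq ?_)
            simp [mulVec, dotProduct, hu]
    have hlu : 0 < l ⬝ᵥ u := by
      obtain ⟨j, hj⟩ := Function.ne_iff.1 hz
      exact Finset.sum_pos' (fun j _ => mul_nonneg (hl j).le (norm_nonneg _))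
        ⟨j, Finset.mem_univ j, mul_pos (hl j) (norm_pos_iff.2 hj)⟩
    have h1 : α * (l ⬝ᵥ u) ≤ t * (l ⬝ᵥ u) := calc
      α * (l ⬝ᵥ u) = ∑ i, l i * (α * u i) := by
        rw [dotProduct, Finset.mul_sum]; exact Finset.sum_congr rfl fun i _ => by ring
      _ ≤ l ⬝ᵥ (M.map (Nat.cast : ℕ → ℝ) *ᵥ u) :=
        Finset.sum_le_sum fun i _ => mul_le_mul_of_nonneg_left (hsub i) (hl i).le
      _ = t * (l ⬝ᵥ u) := by rw [dotProduct_mulVec, hMl, smul_dotProduct, smul_eq_mul]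
    exact le_of_mul_le_mul_right h1 hlu
  · have h1 := hdom t ((hroot _).2 ⟨fun i => (v i : ℂ), ?_, ?_⟩)
    · exact (le_abs_self t).trans (by simpa using h1)
    · obtain ⟨j, hj⟩ := Function.ne_iff.1 hv
      exact Function.ne_iff.2 ⟨j, by simpa using hj⟩
    · funext i
      have h2 := congrArg (Complex.ofReal) (congrFun hMv i)
      simpa [mulVec, dotProduct] using h2

theorem fixed_point_of_primitive_morphism_with_irrational_perron_eigenvalue_not_automatic
    {A : Type*} [Fintype A] [DecidableEq A]
    (φ : A → List A)
    (M : Matrix A A ℕ) (hM : ∀ i j, M i j = (φ j).count i)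
    (hprim : ∃ k : ℕ, ∀ i j, 0 < (M ^ k) i j)
    (α : ℝ) (hirr : Irrational α)
    (heig : (M.map (fun n : ℕ => (n : ℂ))).charpoly.IsRoot (α : ℂ))
    (hdom : ∀ μ : ℂ, (M.map (fun n : ℕ => (n : ℂ))).charpoly.IsRoot μ → ‖μ‖ ≤ α)
    (x : ℕ → A)
    (hstart : ∃ tail, φ (x 0) = x 0 :: tail)
    (hlen : Filter.Tendsto (fun k => ((wordApply φ)^[k] [x 0]).length)
      Filter.atTop Filter.atTop)
    (hfix : ∀ k i : ℕ, ∀ hi : i < ((wordApply φ)^[k] [x 0]).length,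
      ((wordApply φ)^[k] [x 0])[i]'hi = x i) :
    ∀ q : ℕ, 2 ≤ q → ¬ IsQAutomatic q x := by
  intro q hq hauto
  have : Nonempty A := ⟨x 0⟩
  obtain ⟨k, hk⟩ := hprim
  set R : Matrix A A ℝ := M.map (Nat.cast : ℕ → ℝ) with hR
  have hR0 : ∀ i j, 0 ≤ R i j := fun i j => by simp [hR]
  have hRk : ∀ i j, 1 ≤ (R ^ k) i j := by
    intro i j
    have h2 : R ^ k = (M ^ k).map (Nat.cast : ℕ → ℝ) :=
      (map_pow (Nat.castRingHom ℝ).mapMatrix M k).symm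
    rw [h2, map_apply]
    exact_mod_cast hk i j
  have hRkpos : ∀ i j, 0 < (R ^ k) i j := fun i j => one_pos.trans_le (hRk i j)
  obtain ⟨t, v, hv, hv1, hRv⟩ := exists_perron_vector R hR0 k hRkpos
  obtain ⟨s, l, hl, hl1, hRl⟩ := exists_perron_vector Rᵀ (fun i j => hR0 j i) k
    (fun i j => by rw [← transpose_pow]; exact hRkpos j i)
  -- Evaluating `l M v` in two ways shows that the left and right eigenvalues agree.
  have hst : s = t := by
    have hlv : 0 < l ⬝ᵥ v :=
      Finset.sum_pos (fun i _ => mul_pos (hl i) (hv i)) Finset.univ_nonempty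
    have h1 : l ⬝ᵥ (R *ᵥ v) = (l ᵥ* R) ⬝ᵥ v := dotProduct_mulVec l R v
    rw [← mulVec_transpose, hRl, hRv, dotProduct_smul, smul_dotProduct] at h1
    exact (mul_right_cancel₀ hlv.ne' h1).symm
  subst hst
  have hv0 : v ≠ 0 := Function.ne_iff.2 ⟨x 0, (hv _).ne'⟩
  have hα : α = s := perron_eigenvalue_eq M α heig hdom hv0 hRv hl
    (by rw [← mulVec_transpose]; exact hRl)
  have hrat : ∀ i, ∃ r : ℚ, v i = r := by
    intro i
    refine hauto.rational_frequency hq i (v i) ?_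
    have h1 := tendsto_letter_frequency hM hlen hfix (fun i => (hv i).le) hv1
      (fun ε hε => perron_contraction R k hRk hv hv1 hRv hl hl1 hRl hε) i
    refine h1.congr fun n => ?_
    congr 1
    induction n with
    | zero => simp [seqPrefix]
    | succ n ih =>
      rw [Finset.sum_range_succ, ← ih, seqPrefix_add, List.count_append]
      simp [List.count_singleton]
  choose r hr using hrat
  apply hirr
  refine ⟨(∑ j, (M (x 0) j : ℚ) * r j) / r (x 0), ?_⟩
  have h1 := congrFun hRv (x 0)
  have h2 := (hv (x 0)).ne'
  simp only [mulVec, dotProduct, Pi.smul_apply, smul_eq_mul, hr, hR, map_apply] at h1 h2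
  push_cast
  rw [h1, hα, mul_div_cancel_right₀ _ h2]
end

section
/- Let x = (x_n)_{n ≥ 0} be a sequence over a finite alphabet A, let A' be a proper subset of A, and suppose there exists a sequence y = (y_n)_{n ≥ 0} with values in A' such that every finite prefix of y occurs as a factor of x. Let q ≥ 2. If no sequence in the orbit closure of y under the shift map is q-automatic, then x is not q-automatic. -/
/-- Positions `a` and `b` are equivalent when all elements of the `q`-kernel of `x` agree there. -/
def KerEquiv {A : Type*} (q : ℕ) (x : ℕ → A) (a b : ℕ) : Prop :=
  ∀ k r : ℕ, r < q ^ k → x (q ^ k * a + r) = x (q ^ k * b + r)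

lemma mul_add_lt_pow {q k s r r' : ℕ} (hr : r < q ^ s) (hr' : r' < q ^ k) :
    q ^ k * r + r' < q ^ (k + s) :=
  calc q ^ k * r + r' < q ^ k * (r + 1) := by rw [mul_add_one]; omega
    _ ≤ q ^ k * q ^ s := Nat.mul_le_mul_left _ hr
    _ = q ^ (k + s) := (pow_add _ _ _).symm

lemma KerEquiv.block {A : Type*} {q : ℕ} {x : ℕ → A} {a b : ℕ} (h : KerEquiv q x a b)
    {s r : ℕ} (hr : r < q ^ s) : KerEquiv q x (q ^ s * a + r) (q ^ s * b + r) := by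
  intro k r' hr'
  have := h (k + s) (q ^ k * r + r') (mul_add_lt_pow hr hr')
  have e : ∀ c, q ^ k * (q ^ s * c + r) + r' = q ^ (k + s) * c + (q ^ k * r + r') := by
    intro c; rw [pow_add]; ring
  rw [e, e, this]

lemma KerEquiv.trans {A : Type*} {q : ℕ} {x : ℕ → A} {a b c : ℕ} (h : KerEquiv q x a b)
    (h₂ : KerEquiv q x b c) : KerEquiv q x a c :=
  fun k r hr => (h k r hr).trans (h₂ k r hr)

/-- There are finitely many classes, hence every sequence of positions visits one of them
infinitely often. -/
lemma exists_frequent_class {A : Type*} [Finite A] {q : ℕ} {x : ℕ → A} (hx : IsQAutomatic q x)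
    (m : ℕ → ℕ) : ∃ l₀, ∀ N, ∃ l, N ≤ l ∧ KerEquiv q x (m l₀) (m l) := by
  set K := {s : ℕ → A | ∃ k r : ℕ, r < q ^ k ∧ s = fun n => x (q ^ k * n + r)} with hK
  have : Finite K := hx
  obtain ⟨c, hc⟩ := Finite.exists_infinite_fiber (fun l : ℕ => fun f : K => f.1 (m l))
  have hinf : ((fun l : ℕ => fun f : K => f.1 (m l)) ⁻¹' {c}).Infinite := Set.infinite_coe_iff.1 hc
  obtain ⟨l₀, hl₀⟩ := hinf.nonempty
  refine ⟨l₀, fun N => ?_⟩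
  obtain ⟨l, hl, hN⟩ := hinf.exists_gt N
  refine ⟨l, hN.le, fun k r hr => ?_⟩
  have h1 : (fun f : K => f.1 (m l₀)) = fun f : K => f.1 (m l) := Eq.trans hl₀ (Eq.symm hl)
  exact congrFun h1 ⟨fun n => x (q ^ k * n + r), k, r, hr, rfl⟩

/-- Multiplication by `q` induces a self-map of the finite set of classes, and some positive
iterate of it is idempotent. -/
lemma exists_idempotent_power {A : Type*} {q : ℕ} (hq : 2 ≤ q) {x : ℕ → A}
    (hx : IsQAutomatic q x) :
    ∃ t, 0 < t ∧ ∀ a, KerEquiv q x (q ^ t * a) (q ^ t * (q ^ t * a)) := by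
  set K := {s : ℕ → A | ∃ k r : ℕ, r < q ^ k ∧ s = fun n => x (q ^ k * n + r)} with hK
  have : Finite K := hx
  have hmem : ∀ (s : ℕ) (f : K), (fun n => f.1 (q ^ s * n)) ∈ K := by
    rintro s ⟨f, k, r, hr, rfl⟩
    refine ⟨k + s, r, hr.trans_le (Nat.pow_le_pow_right (by omega) (by omega)), ?_⟩
    funext n
    simp only [pow_add, mul_assoc]
  obtain ⟨i, j, hij, h⟩ : ∃ i j, i < j ∧ ∀ a, KerEquiv q x (q ^ i * a) (q ^ j * a) := by
    obtain ⟨i, j, hne, h⟩ := Finite.exists_ne_map_eq_of_infinite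
      (fun s : ℕ => fun f : K => (⟨fun n => f.1 (q ^ s * n), hmem s f⟩ : K))
    have key : ∀ a, KerEquiv q x (q ^ i * a) (q ^ j * a) := fun a k r hr =>
      congrFun (Subtype.ext_iff.1 (congrFun h ⟨fun n => x (q ^ k * n + r), k, r, hr, rfl⟩)) a
    rcases lt_or_gt_of_ne hne with hlt | hlt
    · exact ⟨i, j, hlt, key⟩
    · exact ⟨j, i, hlt, fun a k r hr => (key a k r hr).symm⟩
  obtain ⟨d, rfl⟩ := Nat.exists_eq_add_of_lt hij
  -- The iterates have preperiod at most `i` and period `d + 1`, so an iterate of order at least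
  -- `i` divisible by `d + 1` is idempotent.
  have step : ∀ n, i ≤ n → ∀ l a, KerEquiv q x (q ^ n * a) (q ^ (n + l * (d + 1)) * a) := by
    intro n hn l
    induction l with
    | zero => intro a k r _; simp
    | succ l ih =>
      intro a
      refine (ih a).trans ?_
      have := h (q ^ (n + l * (d + 1) - i) * a)
      rw [← mul_assoc, ← mul_assoc, ← pow_add, ← pow_add] at this
      have e1 : i + (n + l * (d + 1) - i) = n + l * (d + 1) := by omega
      have e2 : i + d + 1 + (n + l * (d + 1) - i) = n + (l + 1) * (d + 1) := by
        rw [add_one_mul l]; omega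
      rwa [e1, e2] at this
  refine ⟨(i + 1) * (d + 1), by positivity, fun a => ?_⟩
  have := step ((i + 1) * (d + 1)) (by nlinarith) (i + 1) a
  rwa [pow_add, mul_assoc] at this

/-- If `q ^ t` fixes the class of `m`, the blocks of `x` of length `q ^ (t * l)` at position
`q ^ (t * l) * m` are prefixes of one another. -/
lemma KerEquiv.stable {A : Type*} {q : ℕ} (hq : 2 ≤ q) {x : ℕ → A} {t m : ℕ}
    (hm : KerEquiv q x m (q ^ t * m)) {l l' n : ℕ} (hl : n < q ^ (t * l))
    (hl' : n < q ^ (t * l')) : x (q ^ (t * l) * m + n) = x (q ^ (t * l') * m + n) := by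
  have hpow : ∀ b, KerEquiv q x m (q ^ (t * b) * m) := by
    intro b
    induction b with
    | zero => intro k r _; simp
    | succ b ih =>
      have := hm.block (s := t * b) (r := 0) (by positivity)
      rw [add_zero, add_zero, ← mul_assoc, ← pow_add, ← mul_add_one] at this
      exact ih.trans this
  wlog hle : l ≤ l' generalizing l l'
  · exact (this hl' hl (by omega)).symm
  obtain ⟨b, rfl⟩ := Nat.exists_eq_add_of_le hle
  have := hpow b (t * l) n hl
  rwa [← mul_assoc, ← pow_add, ← mul_add] at this

/-- A window of length `2 * q ^ k` in `x` contains an aligned block of length `q ^ k`. -/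
lemma exists_aligned_block {A : Type*} {q : ℕ} (hq : 2 ≤ q) {x y : ℕ → A}
    (hpref : ∀ m : ℕ, ∃ n : ℕ, ∀ i < m, x (n + i) = y i) (k : ℕ) :
    ∃ b s, ∀ i < q ^ k, x (q ^ k * b + i) = y (i + s) := by
  obtain ⟨n, hn⟩ := hpref (2 * q ^ k)
  have hpos : 0 < q ^ k := by positivity
  generalize q ^ k = Q at hn hpos ⊢
  have h1 := Nat.div_add_mod n Q
  have h2 := Nat.mod_lt n hpos
  refine ⟨n / Q + 1, Q - n % Q, fun i hi => ?_⟩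
  rw [← hn (i + (Q - n % Q)) (by omega)]
  congr 1
  rw [mul_add_one]
  omega

theorem not_automatic_of_subalphabet_orbit
    {A : Type*} [Fintype A] [TopologicalSpace A] [DiscreteTopology A]
    (x : ℕ → A) (A' : Set A) (hA' : A' ≠ Set.univ)
    (y : ℕ → A) (hy : ∀ n, y n ∈ A')
    (hpref : ∀ m : ℕ, ∃ n : ℕ, ∀ i < m, x (n + i) = y i)
    (q : ℕ) (hq : 2 ≤ q)
    (horb : ∀ z ∈ closure {s : ℕ → A | ∃ j : ℕ, s = fun n => y (n + j)},
      ¬ IsQAutomatic q z) :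
    ¬ IsQAutomatic q x := by
  intro hx
  obtain ⟨t, ht, hidem⟩ := exists_idempotent_power hq hx
  have hblock : ∀ l, ∃ m s, KerEquiv q x m (q ^ t * m) ∧
      ∀ i < q ^ (t * l), x (q ^ (t * l) * m + i) = y (i + s) := by
    intro l
    obtain ⟨b, s, h⟩ := exists_aligned_block hq hpref (t * (l + 1))
    refine ⟨q ^ t * b, s, hidem b, fun i hi => ?_⟩
    rw [← h i (hi.trans_le (Nat.pow_le_pow_right (by omega) (Nat.mul_le_mul_left _ (by omega)))),
      ← mul_assoc, ← pow_add, ← mul_add_one]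
  choose M s hfix hM using hblock
  obtain ⟨l₀, hl₀⟩ := exists_frequent_class hx M
  choose L hL hequiv using hl₀
  have hm := hfix l₀
  set m := M l₀
  have hlt : ∀ {n l : ℕ}, n ≤ l → n < q ^ (t * l) := fun {n l} h =>
    calc n ≤ t * l := h.trans (Nat.le_mul_of_pos_left l ht)
      _ < q ^ (t * l) := Nat.lt_pow_self (by omega)
  refine horb (fun n => x (q ^ (t * n) * m + n)) ?_ ?_
  · refine mem_closure_of_tendsto (f := fun N : ℕ => fun n => y (n + s (L N)))
      (b := Filter.atTop) ?_ (Filter.Eventually.of_forall fun N => ⟨s (L N), rfl⟩)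
    rw [tendsto_pi_nhds]
    intro n
    refine tendsto_const_nhds.congr' ?_
    filter_upwards [Filter.eventually_ge_atTop n] with N hN
    have hn : n < q ^ (t * L N) := hlt (hN.trans (hL N))
    rw [hm.stable hq (hlt le_rfl) hn, ← hM (L N) n hn]
    exact hequiv N _ n hn
  · refine ((Set.Finite.prod hx (Set.finite_Iic t)).image
      (fun p : (ℕ → A) × ℕ => fun n => p.1 (q ^ (p.2 + t * n) * m + n))).subset ?_
    rintro _ ⟨k, r, hr, rfl⟩
    have h1 := Nat.div_add_mod k t
    have h2 := Nat.mod_lt k ht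
    -- `j = t - k % t` is chosen so that `t ∣ k + j`.
    refine ⟨(fun n => x (q ^ k * n + r), t - k % t), ⟨⟨k, r, hr, rfl⟩, Nat.sub_le _ _⟩, ?_⟩
    funext n
    have hexp : t * (k / t + 1 + n) = k + (t - k % t + t * n) := by
      rw [mul_add, mul_add_one]; omega
    have hn : n < q ^ (t - k % t + t * n) :=
      (hlt le_rfl).trans_le (Nat.pow_le_pow_right (by omega) (by omega))
    have hbound : q ^ k * n + r < q ^ (t * (k / t + 1 + n)) := by
      rw [hexp]; exact mul_add_lt_pow hn hr
    have := hm.stable hq (hlt (le_refl (q ^ k * n + r))) hbound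
    simp only
    rw [this, hexp, pow_add q k]
    congr 1
    ring
end

section
/- (Cobham's theorem.) Let q, r ≥ 2 be multiplicatively independent integers, i.e., there are no positive integers s, t with q^s = r^t. If a sequence a : ℕ → A with values in a finite alphabet is both q-automatic and r-automatic, then a is eventually periodic. -/
lemma exists_blockState.{u} {A : Type u} [Finite A] {q : ℕ} {a : ℕ → A}
    (ha : IsQAutomatic q a) :
    ∃ (τ : Type u) (_ : Finite τ) (S : ℕ → τ), ∀ k n n', S n = S n' →
      ∀ i < 2 * q ^ k, a (q ^ k * n + i) = a (q ^ k * n' + i) := by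
  unfold IsQAutomatic at ha
  set Ker : Set (ℕ → A) := {s : ℕ → A | ∃ k r : ℕ, r < q ^ k ∧ s = fun n => a (q ^ k * n + r)}
    with hKer
  have : Finite Ker := ha
  refine ⟨(Ker → A) × (Ker → A), inferInstance, fun n => (fun s => s.1 n, fun s => s.1 (n + 1)), ?_⟩
  intro k n n' h i hi
  have h1 := congrArg Prod.fst h
  have h2 := congrArg Prod.snd h
  by_cases hik : i < q ^ k
  · exact congrFun h1 ⟨fun n => a (q ^ k * n + i), k, i, hik, rfl⟩
  · obtain ⟨j, rfl⟩ := Nat.exists_eq_add_of_le (not_lt.mp hik)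
    have := congrFun h2 ⟨fun n => a (q ^ k * n + j), k, j, by omega, rfl⟩
    simpa [mul_add, add_assoc] using this

lemma exists_two_representatives {τ : Type*} [Finite τ] (T : ℕ → τ) :
    ∃ N C : ℕ, ∀ n ≥ N, ∃ n₁ n₂, n₁ < n₂ ∧ n₂ ≤ C ∧ T n₁ = T n ∧ T n₂ = T n := by
  have key : ∀ v : τ, ∃ M : ℕ, ∀ n ≥ M, T n = v → ∃ n₁ n₂, n₁ < n₂ ∧ n₂ ≤ M ∧
      T n₁ = v ∧ T n₂ = v := by
    intro v
    by_cases h : ∃ n₁ n₂, n₁ < n₂ ∧ T n₁ = v ∧ T n₂ = v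
    · obtain ⟨n₁, n₂, hlt, h1, h2⟩ := h
      exact ⟨n₂, fun _ _ _ => ⟨n₁, n₂, hlt, le_rfl, h1, h2⟩⟩
    · -- The value `v` is taken at most once, so it is not taken at all from some point on.
      by_cases h' : ∃ m, T m = v
      · obtain ⟨m, hm⟩ := h'
        exact ⟨m + 1, fun n hn hv => (h ⟨m, n, hn, hm, hv⟩).elim⟩
      · exact ⟨0, fun n _ hv => (h' ⟨n, hv⟩).elim⟩
  choose M hM using key
  obtain ⟨C, hC⟩ := (Set.finite_range M).bddAbove
  have hC' : ∀ v, M v ≤ C := fun v => hC ⟨v, rfl⟩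
  refine ⟨C, C, fun n hn => ?_⟩
  obtain ⟨n₁, n₂, h1, h2, h3⟩ := hM (T n) n ((hC' _).trans hn) rfl
  exact ⟨n₁, n₂, h1, h2.trans (hC' _), h3⟩

lemma exists_pow_close {q r : ℕ} (hq : 2 ≤ q) (hr : 2 ≤ r)
    (hind : ¬ ∃ s t : ℕ, 0 < s ∧ 0 < t ∧ q ^ s = r ^ t) (B : ℕ) :
    ∃ s t : ℕ, q ^ s ≠ r ^ t ∧ (B : ℝ) * |(q : ℝ) ^ s - (r : ℝ) ^ t| ≤ (r : ℝ) ^ t := by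
  have hlq : 0 < Real.log q := Real.log_pos (by exact_mod_cast hq)
  have hlr : 0 < Real.log r := Real.log_pos (by exact_mod_cast hr)
  -- `M` is large enough for `δ = log r / (M + 1)` to satisfy `δ ≤ 1` and `2 * B * δ ≤ 1`.
  obtain ⟨M, hM⟩ := exists_nat_gt ((2 * B + 1) * Real.log r)
  have hMpos : 0 < M := by
    have : (0 : ℝ) < M := lt_of_le_of_lt (by positivity) hM
    exact_mod_cast this
  obtain ⟨t, s, hs0, -, hst⟩ :=
    Real.exists_int_int_abs_mul_sub_le (Real.log q / Real.log r) hMpos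
  have ht0 : 0 ≤ t := by
    have h1 : (0 : ℝ) < s * (Real.log q / Real.log r) := by
      have : (0 : ℝ) < s := by exact_mod_cast hs0
      positivity
    have h2 : (1 : ℝ) / (M + 1) < 1 := by
      rw [div_lt_one (by positivity)]
      have : (0 : ℝ) < M := by exact_mod_cast hMpos
      linarith
    have h3 := (abs_le.mp hst).2
    have : (-1 : ℝ) < t := by linarith
    have : (-1 : ℤ) < t := by exact_mod_cast this
    omega
  lift s to ℕ using hs0.le
  lift t to ℕ using ht0
  have hs : 0 < s := by exact_mod_cast hs0
  refine ⟨s, t, fun h => ?_, ?_⟩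
  · rcases Nat.eq_zero_or_pos t with rfl | ht
    · have := Nat.one_lt_pow hs.ne' (show 1 < q by omega)
      simp at h
      omega
    · exact hind ⟨s, t, hs, ht, h⟩
  set x : ℝ := s * Real.log q - t * Real.log r with hx
  have hxle : |x| * (M + 1) ≤ Real.log r := by
    have h1 : x = ((s : ℤ) * (Real.log q / Real.log r) - (t : ℤ)) * Real.log r := by
      rw [hx]; push_cast; field_simp
    rw [h1, abs_mul, abs_of_pos hlr]
    have := (le_div_iff₀ (by positivity)).mp hst
    nlinarith
  have hxB : (2 * B + 1) * |x| ≤ 1 := by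
    by_contra! hcon
    have h1 : (M : ℝ) * Real.log r < (2 * B + 1) * Real.log r * Real.log r := by
      have h2 : (M : ℝ) * 1 ≤ M * ((2 * B + 1) * |x|) := by gcongr
      have h3 : (2 * B + 1 : ℝ) * (|x| * (M + 1)) ≤ (2 * B + 1) * Real.log r := by gcongr
      have h4 : (0 : ℝ) ≤ (2 * B + 1) * |x| := by positivity
      nlinarith
    nlinarith
  have hx1 : |x| ≤ 1 := by
    have : (0 : ℝ) ≤ 2 * B * |x| := by positivity
    linarith
  have hpow : (q : ℝ) ^ s = (r : ℝ) ^ t * Real.exp x := by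
    have hq0 : (0 : ℝ) < q := by positivity
    have hr0 : (0 : ℝ) < r := by positivity
    rw [hx, Real.exp_sub, Real.exp_nat_mul, Real.exp_nat_mul, Real.exp_log hq0, Real.exp_log hr0]
    field_simp
  have hexp := Real.abs_exp_sub_one_le hx1
  have hfac : (q : ℝ) ^ s - (r : ℝ) ^ t = (r : ℝ) ^ t * (Real.exp x - 1) := by rw [hpow]; ring
  have hrt : (0 : ℝ) ≤ (r : ℝ) ^ t := by positivity
  rw [hfac, abs_mul, abs_of_nonneg hrt]
  have h5 : (B : ℝ) * |Real.exp x - 1| ≤ 1 := by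
    have : (B : ℝ) * |Real.exp x - 1| ≤ B * (2 * |x|) := by gcongr
    have := abs_nonneg x
    linarith
  calc (B : ℝ) * ((r : ℝ) ^ t * |Real.exp x - 1|)
      = (r : ℝ) ^ t * (B * |Real.exp x - 1|) := by ring
    _ ≤ (r : ℝ) ^ t * 1 := by gcongr
    _ = _ := mul_one _

/-- If equality of `T`-values forces equality of double blocks of `a` at the two scales `L + e` and
`L`, and `e > 0` is small compared with `L`, then `a` is eventually periodic. -/
lemma eventually_periodic_of_blocks {A τ : Type*} {a : ℕ → A} {T : ℕ → τ} {N C L e : ℕ}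
    (hT : ∀ n ≥ N, ∃ n₁ n₂, n₁ < n₂ ∧ n₂ ≤ C ∧ T n₁ = T n ∧ T n₂ = T n)
    (he : 0 < e) (heL : e * (1 + C.factorial + C) ≤ L)
    (hK : ∀ n n', T n = T n' → ∀ i < 2 * (L + e), a ((L + e) * n + i) = a ((L + e) * n' + i))
    (hL : ∀ n n', T n = T n' → ∀ i < 2 * L, a (L * n + i) = a (L * n' + i)) :
    ∃ N p : ℕ, 0 < p ∧ ∀ n ≥ N, a (n + p) = a n := by
  have hC := C.factorial_pos
  refine ⟨(L + e) * N, e * C.factorial, by positivity, fun x hx => ?_⟩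
  have hpos : 0 < L + e := by omega
  obtain ⟨n, i, hi, rfl⟩ : ∃ n i, i < L + e ∧ x = (L + e) * n + i :=
    ⟨x / (L + e), x % (L + e), Nat.mod_lt _ hpos, (Nat.div_add_mod _ _).symm⟩
  have hn : N ≤ n := by
    by_contra! hlt
    have : (L + e) * (n + 1) ≤ (L + e) * N := Nat.mul_le_mul_left _ hlt
    rw [mul_add] at this
    omega
  obtain ⟨n₁, n₂, hlt, h2C, h1, h2⟩ := hT n hn
  obtain ⟨d, rfl⟩ := Nat.exists_eq_add_of_lt hlt
  have heC : e * (n₁ + d + 1) ≤ e * C := Nat.mul_le_mul_left _ h2C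
  have heL' : e + e * C.factorial + e * C ≤ L := by
    calc _ = e * (1 + C.factorial + C) := by ring
      _ ≤ L := heL
  -- The translation by `e * (d + 1)` within the double block at `(L + e) * n₁`.
  have step : ∀ j, j + e * C < 2 * L →
      a ((L + e) * n₁ + (j + e * (d + 1))) = a ((L + e) * n₁ + j) := by
    intro j hj
    calc a ((L + e) * n₁ + (j + e * (d + 1)))
        = a (L * n₁ + (e * (n₁ + d + 1) + j)) := by congr 1; ring
      _ = a (L * (n₁ + d + 1) + (e * (n₁ + d + 1) + j)) :=
          hL _ _ (h1.trans h2.symm) _ (by omega)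
      _ = a ((L + e) * (n₁ + d + 1) + j) := by congr 1; ring
      _ = a ((L + e) * n₁ + j) := hK _ _ (h2.trans h1.symm) _ (by omega)
  obtain ⟨c, hc⟩ := Nat.dvd_factorial (Nat.succ_pos d) (show d + 1 ≤ C by omega)
  have iter : ∀ m ≤ c, a ((L + e) * n₁ + (i + m * (e * (d + 1)))) = a ((L + e) * n₁ + i) := by
    intro m
    induction m with
    | zero => simp
    | succ m ih =>
      intro hm
      rw [← ih (by omega), ← step (i + m * (e * (d + 1)))]
      · congr 1; ring
      · have h3 : m * (e * (d + 1)) ≤ c * (e * (d + 1)) := Nat.mul_le_mul_right _ (by omega)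
        have h4 : c * (e * (d + 1)) = e * C.factorial := by rw [hc, Nat.succ_eq_add_one]; ring
        omega
  have hper := iter c le_rfl
  rw [show c * (e * (d + 1)) = e * C.factorial by rw [hc, Nat.succ_eq_add_one]; ring] at hper
  rw [add_assoc, hK n n₁ h1.symm _ (by omega), hper, hK n n₁ h1.symm _ (by omega)]

theorem cobham_theorem
    {A : Type*} [Fintype A] (q r : ℕ) (hq : 2 ≤ q) (hr : 2 ≤ r)
    (hind : ¬ ∃ s t : ℕ, 0 < s ∧ 0 < t ∧ q ^ s = r ^ t)
    (a : ℕ → A) (haq : IsQAutomatic q a) (har : IsQAutomatic r a) :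
    ∃ N p : ℕ, 0 < p ∧ ∀ n ≥ N, a (n + p) = a n := by
  obtain ⟨τ, _, S, hS⟩ := exists_blockState haq
  obtain ⟨τ', _, S', hS'⟩ := exists_blockState har
  obtain ⟨N, C, hT⟩ := exists_two_representatives (fun n => (S n, S' n))
  -- The summand `1` lets the larger power `r ^ t` be replaced by `q ^ s` when `q ^ s < r ^ t`.
  obtain ⟨s, t, hne, hst⟩ := exists_pow_close hq hr hind (1 + C.factorial + C + 1)
  have hq' : ∀ n n', (S n, S' n) = (S n', S' n') → ∀ i < 2 * q ^ s,
      a (q ^ s * n + i) = a (q ^ s * n' + i) := fun n n' h => hS s n n' (congrArg Prod.fst h)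
  have hr' : ∀ n n', (S n, S' n) = (S n', S' n') → ∀ i < 2 * r ^ t,
      a (r ^ t * n + i) = a (r ^ t * n' + i) := fun n n' h => hS' t n n' (congrArg Prod.snd h)
  have hst' : ((1 + C.factorial + C + 1 : ℕ) : ℝ) * |((q ^ s : ℕ) : ℝ) - ((r ^ t : ℕ) : ℝ)| ≤
      ((r ^ t : ℕ) : ℝ) := by simpa using hst
  generalize q ^ s = K at *
  generalize r ^ t = L at *
  rcases lt_or_gt_of_ne hne with h | h
  · obtain ⟨e, rfl⟩ := Nat.exists_eq_add_of_le h.le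
    have h1 : ((1 + C.factorial + C + 1 : ℕ) : ℝ) * e ≤ ((K + e : ℕ) : ℝ) := by
      simpa using hst'
    have h2 : (1 + C.factorial + C + 1) * e ≤ K + e := by exact_mod_cast h1
    exact eventually_periodic_of_blocks hT (by omega) (by linarith) hr' hq'
  · obtain ⟨e, rfl⟩ := Nat.exists_eq_add_of_le h.le
    have h1 : ((1 + C.factorial + C + 1 : ℕ) : ℝ) * e ≤ (L : ℝ) := by
      simpa using hst'
    have h2 : (1 + C.factorial + C + 1) * e ≤ L := by exact_mod_cast h1
    exact eventually_periodic_of_blocks hT (by omega) (by linarith) hq' hr'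
end

section
/- Let M be a d × d matrix with integer entries and let t ∈ ℝ^d be a row vector such that t·M^n converges to 0 modulo ℤ^d as n → ∞ (i.e., the distance from t·M^n to the lattice ℤ^d tends to 0). Then one can write t = t₁ + t₂ where t₁·M^n → 0 in ℝ^d as n → ∞, and there exists N such that t₂·M^n ∈ ℤ^d for all n ≥ N. Moreover, if M is invertible then t₂ ∈ ℚ^d, and if ψ is any eigenvalue of M with |ψ| ≥ 1 and (column) eigenvector ω, then ⟨t, ω⟩ = ⟨t₂, ω⟩. -/
/-!
Write `t Mⁿ = uₙ + εₙ` with `uₙ` integral and `εₙ → 0`. The vector `εₙ₊₁ - εₙ M = uₙ M - uₙ₊₁` is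
integral and tends to `0`, so it vanishes for `n ≥ N` (`eventually_step`): from then on both
`ε` and `u` are honest orbits of `M`. It remains to pull `ε` back to time zero. Since the images
of the powers of `M` stabilize, `ε_{N+K} = ε_N M^K` lies in the image of `M^{N+K}` for `K` large
(`exists_range_stable`); choose `t₁` with `t₁ M^{N+K} = ε_{N+K}` and put `t₂ = t - t₁`, so that
`t₁ Mⁿ = εₙ` and `t₂ Mⁿ = uₙ` for all `n ≥ N + K`.

If `M` is invertible, `t₂` is rational by Cramer's rule. If `M ω = ψ ω` with `|ψ| ≥ 1`, then
`⟨t₁ Mⁿ, ω⟩ = ψⁿ ⟨t₁, ω⟩ → 0` forces `⟨t₁, ω⟩ = 0`.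
-/

open Filter Topology Matrix

/-- The images of the powers of a square real matrix, acting on row vectors, stabilize. -/
lemma exists_range_stable {d : ℕ} (A : Matrix (Fin d) (Fin d) ℝ) :
    ∃ K : ℕ, ∀ m ≥ K, ∀ v : Fin d → ℝ, ∃ w : Fin d → ℝ, w ᵥ* A ^ m = v ᵥ* A ^ K := by
  obtain ⟨K, hK⟩ := IsArtinian.monotone_stabilizes
    (LinearMap.iterateRange (A.vecMulLinear : Module.End ℝ (Fin d → ℝ)))
  have key : ∀ (n : ℕ) (v : Fin d → ℝ),
      ((A.vecMulLinear : Module.End ℝ (Fin d → ℝ)) ^ n) v = v ᵥ* A ^ n := by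
    intro n
    induction n with
    | zero => simp
    | succ n ih => intro v; simp [pow_succ, pow_succ' A, ih]
  refine ⟨K, fun m hm v => ?_⟩
  have h := hK m hm
  have hv : v ᵥ* A ^ K ∈
      LinearMap.range ((A.vecMulLinear : Module.End ℝ (Fin d → ℝ)) ^ m) := by
    change LinearMap.range _ = LinearMap.range _ at h
    rw [← h]
    exact ⟨v, key K v⟩
  obtain ⟨w, hw⟩ := hv
  exact ⟨w, by rw [← key, hw]⟩

/-- An integral sequence within `o(1)` of an orbit of an integer matrix is eventually an orbit. -/
lemma eventually_step {d : ℕ} (M : Matrix (Fin d) (Fin d) ℤ) (t : Fin d → ℝ)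
    (u : ℕ → Fin d → ℤ)
    (hu : Tendsto (fun n => t ᵥ* (M.map (Int.castRingHom ℝ)) ^ n - fun i => (u n i : ℝ))
      atTop (𝓝 0)) :
    ∃ N, ∀ n ≥ N, u (n + 1) = u n ᵥ* M := by
  set A := M.map (Int.castRingHom ℝ) with hA
  have hcast : ∀ n, (fun i => (u n i : ℝ)) ᵥ* A = fun i => (((u n ᵥ* M) i : ℤ) : ℝ) := by
    intro n
    ext i
    simp [hA, vecMul, dotProduct]
  have h2 : Tendsto (fun n => (t ᵥ* A ^ n - fun i => (u n i : ℝ)) ᵥ* A) atTop (𝓝 0) := by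
    have hc : Continuous fun v : Fin d → ℝ => v ᵥ* A := by fun_prop
    simpa [Function.comp_def] using (hc.tendsto 0).comp hu
  have h3 := ((tendsto_add_atTop_iff_nat 1).2 hu).sub h2
  rw [sub_zero] at h3
  obtain ⟨N, hN⟩ := (Metric.tendsto_atTop.1 h3) 1 one_pos
  refine ⟨N, fun n hn => ?_⟩
  have h4 := hN n hn
  rw [dist_zero_right, sub_vecMul, vecMul_vecMul, ← pow_succ, hcast] at h4
  ext i
  have h5 := (norm_le_pi_norm _ i).trans_lt h4
  simp only [Pi.sub_apply, sub_sub_sub_cancel_left, Real.norm_eq_abs] at h5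
  have h6 : |(u n ᵥ* M) i - u (n + 1) i| < 1 := by exact_mod_cast h5
  rw [Int.abs_lt_one_iff] at h6
  omega

theorem host_coboundary_lemma
    (d : ℕ) (M : Matrix (Fin d) (Fin d) ℤ) (t : Fin d → ℝ)
    (hconv : ∃ u : ℕ → (Fin d → ℤ),
      Filter.Tendsto
        (fun n => Matrix.vecMul t ((M ^ n).map (fun z : ℤ => (z : ℝ))) -
          fun i => ((u n i : ℤ) : ℝ))
        Filter.atTop (nhds 0)) :
    ∃ t₁ t₂ : Fin d → ℝ, t = t₁ + t₂ ∧
      Filter.Tendsto (fun n => Matrix.vecMul t₁ ((M ^ n).map (fun z : ℤ => (z : ℝ))))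
        Filter.atTop (nhds 0) ∧
      (∃ N : ℕ, ∀ n ≥ N, ∀ i : Fin d,
        ∃ z : ℤ, Matrix.vecMul t₂ ((M ^ n).map (fun z' : ℤ => (z' : ℝ))) i = (z : ℝ)) ∧
      (M.det ≠ 0 → ∀ i : Fin d, ∃ r : ℚ, t₂ i = (r : ℝ)) ∧
      (∀ (ψ : ℂ) (ω : Fin d → ℂ), ω ≠ 0 →
        (M.map (fun z : ℤ => (z : ℂ))).mulVec ω = ψ • ω → 1 ≤ ‖ψ‖ →
        ∑ i, (t i : ℂ) * ω i = ∑ i, (t₂ i : ℂ) * ω i) := by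
  obtain ⟨u, hu⟩ := hconv
  have hpow : ∀ n : ℕ, (M ^ n).map (fun z : ℤ => (z : ℝ)) = (M.map (Int.castRingHom ℝ)) ^ n :=
    fun n => Matrix.map_pow M (Int.castRingHom ℝ) n
  simp only [hpow] at hu ⊢
  obtain ⟨N, hN⟩ := eventually_step M t u hu
  set A := M.map (Int.castRingHom ℝ) with hA
  obtain ⟨K, hK⟩ := exists_range_stable A
  set ε : ℕ → Fin d → ℝ := fun n => t ᵥ* A ^ n - fun i => (u n i : ℝ) with hε
  have hεs : ∀ n ≥ N, ε (n + 1) = ε n ᵥ* A := by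
    intro n hn
    simp only [hε, hN n hn, sub_vecMul, vecMul_vecMul, ← pow_succ]
    congr 1
    ext i
    simp [hA, vecMul, dotProduct]
  have hεo : ∀ n ≥ N, ∀ k, ε (n + k) = ε n ᵥ* A ^ k := by
    intro n hn k
    induction k with
    | zero => simp
    | succ k ih => rw [← add_assoc, hεs _ (by omega), ih, vecMul_vecMul, pow_succ]
  obtain ⟨t₁, ht₁⟩ := hK (N + K) (by omega) (ε N)
  rw [← hεo N le_rfl] at ht₁
  have h1 : ∀ n ≥ N + K, t₁ ᵥ* A ^ n = ε n := by
    intro n hn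
    obtain ⟨k, rfl⟩ := Nat.exists_eq_add_of_le hn
    rw [hεo (N + K) (by omega), ← ht₁, vecMul_vecMul, pow_add A (N + K) k]
  have ht0 : Tendsto (fun n => t₁ ᵥ* A ^ n) atTop (𝓝 0) :=
    hu.congr' (by filter_upwards [eventually_ge_atTop (N + K)] with n hn using (h1 n hn).symm)
  have h2 : ∀ n ≥ N + K, (t - t₁) ᵥ* A ^ n = fun i => (u n i : ℝ) := by
    intro n hn
    rw [sub_vecMul, h1 n hn]
    simp [hε]
  refine ⟨t₁, t - t₁, by simp, ht0, ⟨N + K, fun n hn i => ⟨u n i, by rw [h2 n hn]⟩⟩, ?_, ?_⟩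
  · intro hdet i
    set B := M ^ (N + K) with hB
    have hBdet : B.det ≠ 0 := by rw [hB, det_pow]; exact pow_ne_zero _ hdet
    have hAB : A ^ (N + K) = B.map (Int.castRingHom ℝ) := (hpow _).symm
    -- Cramer's rule: multiply `t₂ B = u` on the right by the adjugate of `B`.
    have h3 := congrArg (fun v => (v ᵥ* (B.adjugate.map (Int.castRingHom ℝ))) i) (h2 _ le_rfl)
    simp only [hAB, vecMul_vecMul, ← Matrix.map_mul, mul_adjugate] at h3
    have h4 : ((B.det • (1 : Matrix (Fin d) (Fin d) ℤ)).map (Int.castRingHom ℝ))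
        = (B.det : ℝ) • (1 : Matrix (Fin d) (Fin d) ℝ) := by
      ext a b
      simp only [Matrix.map_apply, Matrix.smul_apply, one_apply]
      split_ifs <;> simp
    rw [h4, vecMul_smul, vecMul_one] at h3
    refine ⟨((u (N + K) ᵥ* B.adjugate) i : ℤ) / (B.det : ℚ), ?_⟩
    have hd : (B.det : ℝ) ≠ 0 := by exact_mod_cast hBdet
    rw [Rat.cast_div, Rat.cast_intCast, Rat.cast_intCast, eq_div_iff hd, mul_comm]
    rw [Pi.smul_apply, smul_eq_mul] at h3
    rw [h3]
    simp [vecMul, dotProduct]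
  · intro ψ ω _ hω hψ
    have hpair : ∀ n : ℕ,
        ∑ i, ((t₁ ᵥ* A ^ n) i : ℂ) * ω i = ψ ^ n * ∑ i, (t₁ i : ℂ) * ω i := by
      intro n
      induction n with
      | zero => simp
      | succ n ih =>
        rw [pow_succ, ← vecMul_vecMul]
        generalize t₁ ᵥ* A ^ n = v at ih ⊢
        have e : (fun i => ((v ᵥ* A) i : ℂ))
            = (fun i => (v i : ℂ)) ᵥ* M.map (fun z : ℤ => (z : ℂ)) := by
          ext i
          simp [hA, vecMul, dotProduct]
        calc ∑ i, ((v ᵥ* A) i : ℂ) * ω i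
            = (fun i => ((v ᵥ* A) i : ℂ)) ⬝ᵥ ω := rfl
          _ = ψ * ∑ i, (v i : ℂ) * ω i := by
              rw [e, ← dotProduct_mulVec, hω, dotProduct_smul]; rfl
          _ = _ := by rw [ih]; ring
    have hlim : Tendsto (fun n => ∑ i, ((t₁ ᵥ* A ^ n) i : ℂ) * ω i) atTop (𝓝 0) := by
      have hc : Continuous fun v : Fin d → ℝ => ∑ i, (v i : ℂ) * ω i := by fun_prop
      simpa [Function.comp_def] using (hc.tendsto 0).comp ht0
    have hz : ∑ i, (t₁ i : ℂ) * ω i = 0 := by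
      refine norm_le_zero_iff.1 (ge_of_tendsto' (tendsto_norm_zero.comp hlim) fun n => ?_)
      simp only [Function.comp_apply, hpair, norm_mul, norm_pow]
      exact le_mul_of_one_le_left (norm_nonneg _) (one_le_pow₀ hψ)
    simp [sub_mul, Finset.sum_sub_distrib, hz]
end
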